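/- arXiv:2012.14812 — 3 statements merged into one kernel-verified Lean document; each statement's English description precedes it below -/
import Mathlib

section
/- Let f : A → B be a K-linear map with f(1)=1 between commutative unital K-algebras, and let a ∈ A be nilpotent such that f(a^m) is nilpotent in B for every m ≥ 1. Then κ(f)_n(a,…,a) = 0 for all sufficiently large n, the element f(exp(a)) − 1 is nilpotent in B, and Σ_{n≥1} (1/n!) κ(f)_n(a,…,a) = log(f(exp(a))), where exp(a) := Σ_{m≥0} a^m/m! and log(1+x) := Σ_{k≥1} (−1)^{k−1} x^k/k (all sums are finite by nilpotency). -/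
open Finset

/-- The set of partitions of `{0,…,n-1}` into nonempty, pairwise disjoint blocks. -/
def partitionsOf (n : ℕ) : Finset (Finset (Finset (Fin n))) :=
  ((Finset.univ : Finset (Fin n)).powerset.powerset).filter fun P =>
    (∀ s ∈ P, s.Nonempty) ∧ (∀ s ∈ P, ∀ t ∈ P, s ≠ t → s ∩ t = ∅) ∧ P.sup id = Finset.univ

/-- The `n`-th cumulant of a map `f` between commutative rings. -/
noncomputable def cumul {R S : Type*} [CommRing R] [CommRing S]
    (f : R → S) (n : ℕ) (a : Fin n → R) : S :=
  ∑ P ∈ partitionsOf n,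
    ((-1 : ℤ) ^ (P.card - 1) * ((P.card - 1).factorial : ℤ)) • ∏ s ∈ P, f (∏ i ∈ s, a i)

/-- Exponential `exp(a) = Σ_{m≥0} a^m/m!` of an element of a `K`-algebra; the sum is
finite whenever `a` is nilpotent. -/
noncomputable def expNil (K : Type*) {A : Type*} [Field K] [CommRing A] [Algebra K A]
    (a : A) : A :=
  ∑ᶠ m : ℕ, ((m.factorial : K)⁻¹) • a ^ m

/-- Logarithm `log(1+x) = Σ_{k≥1} (−1)^{k−1} x^k/k`; the sum is finite whenever `x` is
nilpotent. -/
noncomputable def log1p (K : Type*) {B : Type*} [Field K] [CommRing B] [Algebra K B]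
    (x : B) : B :=
  ∑ᶠ k : ℕ, (((-1 : K) ^ k) / ((k : K) + 1)) • x ^ (k + 1)

def partsF {α : Type*} [DecidableEq α] (U : Finset α) : Finset (Finset (Finset α)) :=
  (U.powerset.powerset).filter fun P =>
    (∀ s ∈ P, s.Nonempty) ∧ (∀ s ∈ P, ∀ t ∈ P, s ≠ t → s ∩ t = ∅) ∧ P.sup id = U

lemma mem_partsF {α : Type*} [DecidableEq α] {U : Finset α} {P : Finset (Finset α)} :
    P ∈ partsF U ↔ (∀ s ∈ P, s.Nonempty) ∧
      (∀ s ∈ P, ∀ t ∈ P, ∀ y, y ∈ s → y ∈ t → s = t) ∧ (∀ y, y ∈ U ↔ ∃ s ∈ P, y ∈ s) := by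
  unfold partsF
  simp only [mem_filter, mem_powerset]
  constructor
  · rintro ⟨_, h1, h2, h3⟩
    refine ⟨h1, ?_, ?_⟩
    · intro s hs t ht y hys hyt
      by_contra hne
      have := h2 s hs t ht hne
      have hy : y ∈ s ∩ t := mem_inter.2 ⟨hys, hyt⟩
      rw [this] at hy
      simp at hy
    · intro y
      rw [← h3]
      simp [Finset.mem_sup]
  · rintro ⟨h1, h2, h3⟩
    refine ⟨?_, h1, ?_, ?_⟩
    · intro s hs
      rw [mem_powerset]
      intro y hy
      exact (h3 y).2 ⟨s, hs, hy⟩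
    · intro s hs t ht hne
      ext y
      simp only [mem_inter, notMem_empty, iff_false]
      rintro ⟨a, b⟩
      exact hne (h2 s hs t ht y a b)
    · ext y
      rw [h3]
      simp [Finset.mem_sup]

noncomputable def Ssum {α B : Type*} [DecidableEq α] [CommRing B] (w : ℕ → B) (U : Finset α)
    (k : ℕ) : B :=
  ∑ P ∈ (partsF U).filter (fun P => P.card = k), ∏ s ∈ P, w s.card

lemma Ssum_rec {α B : Type*} [DecidableEq α] [CommRing B] (w : ℕ → B) (U : Finset α)
    (x : α) (hx : x ∉ U) (k : ℕ) :
    Ssum w (insert x U) (k + 1) = ∑ V ∈ U.powerset, w (V.card + 1) * Ssum w (U \ V) k := by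
  unfold Ssum
  simp_rw [Finset.mul_sum]
  rw [Finset.sum_sigma']
  symm
  have key : ∀ V ∈ U.powerset, ∀ Q ∈ partsF (U \ V), insert x V ∉ Q := by
    intro V hV Q hQ h
    rw [mem_partsF] at hQ
    have := (hQ.2.2 x).2 ⟨_, h, mem_insert_self _ _⟩
    simp at this
    exact hx this.1
  refine Finset.sum_bij (fun p _ => insert (insert x p.1) p.2) ?_ ?_ ?_ ?_
  · rintro ⟨V, Q⟩ h
    simp only [mem_sigma, mem_filter] at h
    obtain ⟨hV, hQ, hc⟩ := h
    have hk := key V hV Q hQ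
    rw [mem_powerset] at hV
    rw [mem_filter]
    refine ⟨?_, by rw [card_insert_of_notMem hk, hc]⟩
    rw [mem_partsF] at hQ ⊢
    obtain ⟨h1, h2, h3⟩ := hQ
    have h4 : ∀ s ∈ Q, ∀ y ∈ s, y ∉ insert x V := by
      intro s hs y hy hy'
      have := (h3 y).2 ⟨s, hs, hy⟩
      simp only [mem_sdiff, mem_insert] at this hy'
      rcases hy' with rfl | h
      · exact hx this.1
      · exact this.2 h
    refine ⟨?_, ?_, ?_⟩
    · intro s hs
      rcases mem_insert.1 hs with rfl | hs
      · exact insert_nonempty _ _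
      · exact h1 s hs
    · intro s hs t ht y hys hyt
      rcases mem_insert.1 hs with rfl | hs <;> rcases mem_insert.1 ht with rfl | ht
      · rfl
      · exact absurd hys (h4 t ht y hyt)
      · exact absurd hyt (h4 s hs y hys)
      · exact h2 s hs t ht y hys hyt
    · intro y
      have := h3 y
      simp only [mem_sdiff] at this
      simp only [mem_insert, exists_eq_or_imp]
      rw [← this]
      have := @hV y
      tauto
  · rintro ⟨V, Q⟩ h ⟨V', Q'⟩ h' heq
    simp only [mem_sigma, mem_filter] at h h'
    obtain ⟨hV, hQ, -⟩ := h
    obtain ⟨hV', hQ', -⟩ := h'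
    have hk := key V hV Q hQ
    have hk' := key V' hV' Q' hQ'
    simp only at heq
    have hxQ' : ∀ s ∈ Q', x ∉ s := by
      intro s hs hxs
      have := ((mem_partsF.1 hQ').2.2 x).2 ⟨s, hs, hxs⟩
      simp only [mem_sdiff] at this
      exact hx this.1
    have e1 : insert x V = insert x V' := by
      have : insert x V ∈ insert (insert x V') Q' := by
        rw [← heq]; exact mem_insert_self _ _
      rcases mem_insert.1 this with h | h
      · exact h
      · exact absurd (mem_insert_self _ _) (hxQ' _ h)
    have e2 : Q = Q' := by
      rw [← erase_insert hk, ← erase_insert hk', heq, e1]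
    have e3 : V = V' := by
      rw [mem_powerset] at hV hV'
      rw [← erase_insert (fun h => hx (hV h)), ← erase_insert (fun h => hx (hV' h)), e1]
    subst e2 e3
    rfl
  · intro P hP
    rw [mem_filter, mem_partsF] at hP
    obtain ⟨⟨h1, h2, h3⟩, hc⟩ := hP
    obtain ⟨s, hs, hxs⟩ := (h3 x).1 (mem_insert_self _ _)
    have hsU : s ⊆ insert x U := fun y hy => (h3 y).2 ⟨s, hs, hy⟩
    refine ⟨⟨s.erase x, P.erase s⟩, ?_, ?_⟩
    · simp only [mem_sigma, mem_filter, mem_powerset]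
      refine ⟨?_, ?_, by rw [card_erase_of_mem hs, hc]; rfl⟩
      · intro y hy
        have := hsU (mem_of_mem_erase hy)
        exact (mem_insert.1 this).resolve_left (ne_of_mem_erase hy)
      · rw [mem_partsF]
        refine ⟨fun t ht => h1 t (mem_of_mem_erase ht), fun t ht u hu =>
          h2 t (mem_of_mem_erase ht) u (mem_of_mem_erase hu), ?_⟩
        intro y
        simp only [mem_sdiff, mem_erase]
        constructor
        · rintro ⟨hy, hn⟩
          obtain ⟨t, ht, hyt⟩ := (h3 y).1 (mem_insert_of_mem hy)
          refine ⟨t, ⟨?_, ht⟩, hyt⟩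
          rintro rfl
          exact hn ⟨fun e => hx (e ▸ hy), hyt⟩
        · rintro ⟨t, ⟨hts, ht⟩, hyt⟩
          have hys : y ∉ s := fun h => hts (h2 t ht s hs y hyt h)
          have hyx : y ≠ x := fun e => hys (e ▸ hxs)
          exact ⟨(mem_insert.1 ((h3 y).2 ⟨t, ht, hyt⟩)).resolve_left hyx, fun h => hys h.2⟩
    · simp only [insert_erase hxs, insert_erase hs]
  · rintro ⟨V, Q⟩ h
    simp only [mem_sigma, mem_filter] at h
    obtain ⟨hV, hQ, hc⟩ := h
    have hk := key V hV Q hQ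
    rw [mem_powerset] at hV
    simp only
    rw [prod_insert hk, card_insert_of_notMem (fun h => hx (hV h))]

lemma Ssum_eq {α B : Type*} [DecidableEq α] [CommRing B] (w : ℕ → B) (g : Polynomial B)
    (hg0 : g.coeff 0 = 0) (hg : ∀ j, ((j + 1).factorial : B) * g.coeff (j + 1) = w (j + 1))
    (k : ℕ) : ∀ U : Finset α,
      (k.factorial : B) * Ssum w U k = (U.card.factorial : B) * (g ^ k).coeff U.card := by
  induction k with
  | zero =>
    intro U
    have : Ssum w U 0 = if U = ∅ then 1 else 0 := by
      unfold Ssum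
      have : (partsF U).filter (fun P => P.card = 0) = if U = ∅ then {∅} else ∅ := by
        ext P
        rw [mem_filter, card_eq_zero, mem_partsF]
        constructor
        · rintro ⟨⟨h1, h2, h3⟩, rfl⟩
          have : U = ∅ := by
            ext y; rw [h3]; simp
          simp [this]
        · split_ifs with h
          · intro hP
            rw [mem_singleton] at hP
            subst hP h
            simp
          · simp
      rw [this]
      split_ifs <;> simp
    rw [this]
    by_cases hU : U = ∅
    · simp [hU]
    · simp [hU, Polynomial.coeff_one]
  | succ k ih =>
    intro U
    induction U using Finset.induction_on with
    | empty =>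
      have : Ssum w (∅ : Finset α) (k + 1) = 0 := by
        unfold Ssum
        apply sum_eq_zero
        intro P hP
        exfalso
        rw [mem_filter, mem_partsF] at hP
        obtain ⟨⟨h1, h2, h3⟩, hc⟩ := hP
        have : P.Nonempty := by rw [← card_pos]; omega
        obtain ⟨s, hs⟩ := this
        obtain ⟨y, hy⟩ := h1 s hs
        simpa using (h3 y).2 ⟨s, hs, hy⟩
      rw [this]
      simp [Polynomial.coeff_zero_eq_eval_zero] at hg0 ⊢
      simp [hg0]
    | insert x U hx _ =>
      rw [Ssum_rec w U x hx k, card_insert_of_notMem hx]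
      have h1 : (k.factorial : B) * ∑ V ∈ U.powerset, w (V.card + 1) * Ssum w (U \ V) k
          = (U.card.factorial : B) * (Polynomial.derivative g * g ^ k).coeff U.card := by
        rw [mul_sum, Polynomial.coeff_mul, Finset.Nat.sum_antidiagonal_eq_sum_range_succ
          (fun i j => (Polynomial.derivative g).coeff i * (g ^ k).coeff j)]
        have : ∀ V ∈ U.powerset, (k.factorial : B) * (w (V.card + 1) * Ssum w (U \ V) k)
            = (fun c => w (c + 1) * (((U.card - c).factorial : B) * (g ^ k).coeff (U.card - c)))
              V.card := by
          intro V hV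
          have := ih (U \ V)
          rw [card_sdiff_of_subset (mem_powerset.1 hV)] at this
          simp only
          rw [← this]
          ring
        rw [sum_congr rfl this, Finset.sum_powerset_apply_card (fun c => w (c + 1) *
          (((U.card - c).factorial : B) * (g ^ k).coeff (U.card - c))), mul_sum]
        apply sum_congr rfl
        intro c hc
        have hc' : c ≤ U.card := by rw [mem_range] at hc; omega
        rw [← hg, Polynomial.coeff_derivative, nsmul_eq_mul, ← Nat.choose_mul_factorial_mul_factorial hc',
          Nat.factorial_succ]
        push_cast
        ring
      have h2 := Polynomial.derivative_pow_succ g k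
      have h3 := Polynomial.coeff_derivative (g ^ (k + 1)) U.card
      rw [Nat.factorial_succ, Nat.factorial_succ]
      push_cast
      rw [mul_assoc, h1]
      have h4 : (g ^ (k + 1)).coeff (U.card + 1) * ((U.card : B) + 1)
          = ((k : B) + 1) * (Polynomial.derivative g * g ^ k).coeff U.card := by
        rw [← h3, h2, mul_assoc, Polynomial.coeff_C_mul, mul_comm (g ^ k)]
      linear_combination (-(U.card.factorial : B)) * h4

lemma cumul_eq (K : Type*) {A B : Type*} [Field K] [CharZero K]
    [CommRing A] [CommRing B] [Algebra K B]
    (f : A → B) (a : A) (g : Polynomial B) (M : ℕ) (hM : g ^ M = 0)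
    (hg0 : g.coeff 0 = 0)
    (hg : ∀ j, ((j + 1).factorial : B) * g.coeff (j + 1) = f (a ^ (j + 1))) (n : ℕ) :
    (((n + 1).factorial : K)⁻¹) • cumul f (n + 1) (fun _ => a) =
      (∑ k ∈ range M, (((-1 : K) ^ k) / ((k : K) + 1)) • g ^ (k + 1)).coeff (n + 1) := by
  obtain ⟨L, hL⟩ : ∃ L, L = max M ((partitionsOf (n + 1)).sup card) := ⟨_, rfl⟩
  have hext : (∑ k ∈ range M, (((-1 : K) ^ k) / ((k : K) + 1)) • g ^ (k + 1))
      = ∑ k ∈ range L, (((-1 : K) ^ k) / ((k : K) + 1)) • g ^ (k + 1) := by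
    apply sum_subset
    · intro k hk
      rw [mem_range] at *
      exact lt_of_lt_of_le hk (hL ▸ le_max_left _ _)
    · intro k _ hk
      rw [mem_range, not_lt] at hk
      rw [pow_eq_zero_of_le (by omega) hM, smul_zero]
  rw [hext]
  have hp : partitionsOf (n + 1) = partsF (univ : Finset (Fin (n + 1))) := by
    ext P
    simp only [partitionsOf, partsF, mem_filter]
  have hmaps : ∀ P ∈ partitionsOf (n + 1), P.card ∈ range (L + 1) := by
    intro P hP
    rw [mem_range]
    have := Finset.le_sup (f := card) hP
    have h2 : (partitionsOf (n + 1)).sup card ≤ L := hL ▸ le_max_right _ _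
    omega
  have hc : cumul f (n + 1) (fun _ => a) = ∑ k ∈ range (L + 1),
      ((-1 : ℤ) ^ (k - 1) * ((k - 1).factorial : ℤ)) •
        Ssum (fun j => f (a ^ j)) (univ : Finset (Fin (n + 1))) k := by
    unfold cumul Ssum
    rw [← Finset.sum_fiberwise_of_maps_to hmaps, hp]
    apply sum_congr rfl
    intro k _
    rw [smul_sum]
    apply sum_congr rfl
    intro P hP
    rw [(mem_filter.1 hP).2]
    simp
  have hS := fun k => Ssum_eq (α := Fin (n + 1)) (fun j => f (a ^ j)) g hg0 hg k univ
  simp only [card_univ, Fintype.card_fin] at hS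
  have hS' : ∀ k, Ssum (fun j => f (a ^ j)) (univ : Finset (Fin (n + 1))) k
      = (((n + 1).factorial : K) * (k.factorial : K)⁻¹) • (g ^ k).coeff (n + 1) := by
    intro k
    have hk : (k.factorial : K) ≠ 0 := by exact_mod_cast k.factorial_ne_zero
    have e1 := hS k
    have e2 : ∀ (m : ℕ) (b : B), (m : B) * b = (m : K) • b := by
      intro m b
      rw [Algebra.smul_def, map_natCast]
    rw [e2, e2] at e1
    rw [mul_comm, mul_smul, ← e1, smul_smul, inv_mul_cancel₀ hk, one_smul]
  rw [hc, sum_range_succ', hS' 0]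
  simp only [hS', pow_zero, Polynomial.coeff_one]
  simp only [Nat.add_eq_zero_iff, one_ne_zero, and_false, if_false, smul_zero, add_zero]
  rw [smul_sum, Polynomial.finsetSum_coeff]
  apply sum_congr rfl
  intro k _
  rw [Polynomial.coeff_smul, ← Int.cast_smul_eq_zsmul K, smul_smul, smul_smul]
  congr 1
  have h1 : ((n + 1).factorial : K) ≠ 0 := by exact_mod_cast (n + 1).factorial_ne_zero
  have h2 : (k.factorial : K) ≠ 0 := by exact_mod_cast k.factorial_ne_zero
  have h3 : (k : K) + 1 ≠ 0 := by exact_mod_cast k.succ_ne_zero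
  rw [Nat.factorial_succ k, Nat.add_sub_cancel]
  push_cast
  field_simp

/-- for a unital linear map `f` and a nilpotent `a` with all `f(a^m)`
nilpotent, the diagonal cumulants eventually vanish, `f(exp(a)) − 1` is nilpotent, and
`Σ_{n≥1} (1/n!) κ(f)_n(a,…,a) = log(f(exp(a)))`. -/
theorem cumulants_exp_log (K A B : Type*) [Field K] [CharZero K]
    [CommRing A] [Algebra K A] [CommRing B] [Algebra K B]
    (f : A →ₗ[K] B) (hf : f 1 = 1) (a : A) (ha : IsNilpotent a)
    (hfa : ∀ m : ℕ, 1 ≤ m → IsNilpotent (f (a ^ m))) :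
    (∃ N : ℕ, ∀ n : ℕ, N ≤ n → cumul (⇑f) n (fun _ => a) = 0) ∧
    IsNilpotent (f (expNil K a) - 1) ∧
    (∑ᶠ n : ℕ, (((n + 1).factorial : K)⁻¹) • cumul (⇑f) (n + 1) (fun _ => a)) =
      log1p K (f (expNil K a) - 1) := by
  classical
  obtain ⟨D, hD⟩ := ha
  set g : Polynomial B := ∑ j ∈ range D,
    Polynomial.monomial (j + 1) ((((j + 1).factorial : K)⁻¹) • f (a ^ (j + 1))) with hgdef
  have hcoeff : ∀ j, g.coeff (j + 1) = (((j + 1).factorial : K)⁻¹) • f (a ^ (j + 1)) := by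
    intro j
    rw [hgdef, Polynomial.finsetSum_coeff]
    simp only [Polynomial.coeff_monomial, Nat.add_right_cancel_iff]
    rw [Finset.sum_ite_eq' (range D) j]
    split_ifs with h
    · rfl
    · rw [mem_range, not_lt] at h
      rw [pow_eq_zero_of_le (by omega) hD, map_zero, smul_zero]
  have hg0 : g.coeff 0 = 0 := by
    rw [hgdef, Polynomial.finsetSum_coeff]
    apply sum_eq_zero
    intro j _
    simp [Polynomial.coeff_monomial]
  have hg : ∀ j, ((j + 1).factorial : B) * g.coeff (j + 1) = f (a ^ (j + 1)) := by
    intro j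
    have hk : ((j + 1).factorial : K) ≠ 0 := by exact_mod_cast (j + 1).factorial_ne_zero
    rw [hcoeff, ← map_natCast (algebraMap K B), ← Algebra.smul_def, smul_smul,
      mul_inv_cancel₀ hk, one_smul]
  have hnil : IsNilpotent g := by
    rw [Polynomial.isNilpotent_iff]
    intro i
    cases i with
    | zero => rw [hg0]; exact IsNilpotent.zero
    | succ j => rw [hcoeff]; exact (hfa (j + 1) (by omega)).smul _
  obtain ⟨M, hM⟩ := hnil
  have hx : f (expNil K a) - 1 = g.eval 1 := by
    have : expNil K a = ∑ m ∈ range (D + 1), ((m.factorial : K)⁻¹) • a ^ m := by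
      unfold expNil
      apply finsum_eq_sum_of_support_subset
      intro m hm
      rw [Function.mem_support] at hm
      rw [mem_coe, mem_range]
      by_contra h
      exact hm (by rw [pow_eq_zero_of_le (by omega) hD, smul_zero])
    rw [this, map_sum, sum_range_succ']
    simp only [map_smul, pow_zero, hf, Nat.factorial_zero, Nat.cast_one, inv_one, one_smul]
    rw [add_sub_cancel_right, hgdef, Polynomial.eval_finsetSum]
    simp
  have hxM : (g.eval 1) ^ M = 0 := by
    rw [← Polynomial.eval_pow, hM, Polynomial.eval_zero]
  have hcum := cumul_eq K (⇑f) a g M hM hg0 hg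
  set h : Polynomial B := ∑ k ∈ range M, (((-1 : K) ^ k) / ((k : K) + 1)) • g ^ (k + 1) with hh
  refine ⟨⟨h.natDegree + 1, ?_⟩, ?_, ?_⟩
  · intro n hn
    obtain ⟨m, rfl⟩ : ∃ m, n = m + 1 := ⟨n - 1, by omega⟩
    have h1 := hcum m
    rw [Polynomial.coeff_eq_zero_of_natDegree_lt (by omega)] at h1
    have hk : ((m + 1).factorial : K) ≠ 0 := by exact_mod_cast (m + 1).factorial_ne_zero
    rw [← one_smul K (cumul _ _ _), ← mul_inv_cancel₀ hk, mul_smul, h1, smul_zero]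
  · rw [hx]
    exact ⟨M, hxM⟩
  · have h0 : h.coeff 0 = 0 := by
      rw [hh, Polynomial.finsetSum_coeff]
      apply sum_eq_zero
      intro k _
      rw [Polynomial.coeff_smul, Polynomial.coeff_zero_eq_eval_zero, Polynomial.eval_pow,
        ← Polynomial.coeff_zero_eq_eval_zero, hg0]
      simp
    have hev : h.eval 1 = log1p K (g.eval 1) := by
      unfold log1p
      rw [finsum_eq_sum_of_support_subset (s := range M)]
      · rw [hh, Polynomial.eval_finsetSum]
        apply sum_congr rfl
        intro k _
        rw [Polynomial.eval_smul, Polynomial.eval_pow]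
      · intro m hm
        rw [Function.mem_support] at hm
        rw [mem_coe, mem_range]
        by_contra h
        exact hm (by rw [pow_eq_zero_of_le (by omega) hxM, smul_zero])
    rw [hx, ← hev, finsum_congr hcum, Polynomial.eval_eq_sum_range' (n := h.natDegree + 1 + 1) (by omega),
      sum_range_succ', h0, finsum_eq_sum_of_support_subset (s := range (h.natDegree + 1))]
    · simp
    · intro m hm
      rw [Function.mem_support] at hm
      rw [mem_coe, mem_range]
      by_contra h'
      exact hm (Polynomial.coeff_eq_zero_of_natDegree_lt (by omega))
end

section
/- Let (σ,τ,h) be a semifull algebra contraction of (A,d_A) onto (B,d_B). Then for every n ≥ 2 and all x_1,…,x_n ∈ B, the Koszul brackets of d_B satisfy K(d_B)_n(x_1,…,x_n) = Σ σ( K(d_A)_k( κ(τ)_{|I_1|}((x_i)_{i∈I_1}), …, κ(τ)_{|I_k|}((x_i)_{i∈I_k}) ) ), the sum running over all partitions {I_1,…,I_k} of {1,…,n} into k ≥ 2 nonempty blocks. (Hence the L∞ structure given by the Koszul brackets of d_B is obtained by homotopy transfer from the one given by the Koszul brackets of d_A.) -/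
open Finset

/-- The `n`-th Koszul bracket of an operator `D` on a commutative ring. -/
noncomputable def koszul {R : Type*} [CommRing R] (D : R → R) (n : ℕ) (a : Fin n → R) : R :=
  ∑ s ∈ (Finset.univ : Finset (Fin n)).powerset.filter fun s => s.Nonempty,
    (-1 : ℤ) ^ (n - s.card) • (D (∏ i ∈ s, a i) * ∏ i ∈ sᶜ, a i)

/-- Restriction of a family `a` to a finite subset `s` of its index set. -/
noncomputable def restr {α β : Type*} (a : α → β) (s : Finset α) : Fin s.card → β :=
  fun i => a (s.equivFin.symm i).1


namespace Aux

variable {α : Type*} [DecidableEq α]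

def parts (U : Finset α) : Finset (Finset (Finset α)) :=
  U.powerset.powerset.filter fun P =>
    (∀ s ∈ P, s.Nonempty) ∧ (∀ s ∈ P, ∀ t ∈ P, s ≠ t → s ∩ t = ∅) ∧ P.sup id = U

theorem mem_parts {U : Finset α} {P : Finset (Finset α)} : P ∈ parts U ↔
    (∀ s ∈ P, s.Nonempty) ∧ (∀ s ∈ P, ∀ t ∈ P, ∀ i, i ∈ s → i ∈ t → s = t) ∧
      (∀ i, i ∈ U ↔ ∃ s ∈ P, i ∈ s) := by
  unfold parts
  simp only [mem_filter, mem_powerset]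
  constructor
  · rintro ⟨-, h1, h2, h3⟩
    refine ⟨h1, ?_, ?_⟩
    · intro s hs t ht i his hit
      by_contra hne
      have := h2 s hs t ht hne
      have h4 : i ∈ s ∩ t := mem_inter.2 ⟨his, hit⟩
      rw [this] at h4
      simp at h4
    · intro i
      rw [← h3]
      simp [Finset.mem_sup]
  · rintro ⟨h1, h2, h3⟩
    refine ⟨?_, h1, ?_, ?_⟩
    · intro s hs
      rw [mem_powerset]
      intro i hi
      exact (h3 i).2 ⟨s, hs, hi⟩
    · intro s hs t ht hne
      rw [Finset.eq_empty_iff_forall_notMem]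
      intro i hi
      rw [mem_inter] at hi
      exact hne (h2 s hs t ht i hi.1 hi.2)
    · ext i
      rw [h3]
      simp [Finset.mem_sup]

theorem parts_empty : parts (∅ : Finset α) = {∅} := by
  ext P
  rw [mem_parts, mem_singleton]
  constructor
  · rintro ⟨h1, h2, h3⟩
    rw [Finset.eq_empty_iff_forall_notMem]
    intro s hs
    obtain ⟨i, hi⟩ := h1 s hs
    have := (h3 i).2 ⟨s, hs, hi⟩
    simp at this
  · rintro rfl
    simp

theorem sum_marked {M : Type*} [AddCommMonoid M] (U : Finset α)
    (G : Finset α → Finset (Finset α) → M) :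
    ∑ P ∈ parts U, ∑ I ∈ P, G I (P.erase I) =
      ∑ I ∈ U.powerset.filter (fun I => I.Nonempty), ∑ Q ∈ parts (U \ I), G I Q := by
  rw [Finset.sum_sigma', Finset.sum_sigma']
  refine Finset.sum_bij' (fun p _ => ⟨p.2, p.1.erase p.2⟩) (fun p _ => ⟨insert p.1 p.2, p.1⟩)
    ?_ ?_ ?_ ?_ ?_
  · rintro ⟨P, I⟩ hp
    simp only [mem_sigma, mem_parts, mem_filter, mem_powerset, mem_sdiff, mem_erase] at hp ⊢
    obtain ⟨⟨h1, h2, h3⟩, hI⟩ := hp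
    refine ⟨⟨fun i hi => (h3 i).2 ⟨I, hI, hi⟩, h1 I hI⟩, ?_, ?_, ?_⟩
    · grind
    · grind
    · grind
  · rintro ⟨I, Q⟩ hp
    simp only [mem_sigma, mem_parts, mem_filter, mem_powerset, mem_sdiff, mem_insert] at hp ⊢
    obtain ⟨⟨hI, hI'⟩, h1, h2, h3⟩ := hp
    refine ⟨⟨?_, ?_, ?_⟩, by simp⟩
    · grind
    · grind
    · grind
  · rintro ⟨P, I⟩ hp
    simp only [mem_sigma] at hp
    simp [insert_erase hp.2]
  · rintro ⟨I, Q⟩ hp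
    simp only [mem_sigma, mem_parts, mem_filter, mem_powerset, mem_sdiff] at hp
    obtain ⟨⟨hI, hI'⟩, h1, h2, h3⟩ := hp
    have : I ∉ Q := by
      intro hIQ
      obtain ⟨i, hi⟩ := hI'
      exact ((h3 i).2 ⟨I, hIQ, hi⟩).2 hi
    simp [erase_insert this]
  · rintro ⟨P, I⟩ hp
    rfl

theorem sum_split {M : Type*} [AddCommMonoid M] (U : Finset α)
    (G : Finset (Finset α) → Finset (Finset α) → M) :
    ∑ P ∈ parts U, ∑ S ∈ P.powerset, G S (P \ S) =
      ∑ V ∈ U.powerset, ∑ S ∈ parts V, ∑ Q ∈ parts (U \ V), G S Q := by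
  simp_rw [Finset.sum_sigma']
  refine Finset.sum_bij' (fun p _ => ⟨p.2.sup id, p.2, p.1 \ p.2⟩)
    (fun p _ => ⟨p.2.1 ∪ p.2.2, p.2.1⟩)
    ?_ ?_ ?_ ?_ ?_
  · rintro ⟨P, S⟩ hp
    simp only [mem_sigma, mem_parts, mem_powerset, mem_sdiff, Finset.mem_sup, id] at hp ⊢
    obtain ⟨⟨h1, h2, h3⟩, hS⟩ := hp
    refine ⟨?_, ⟨?_, ?_, ?_⟩, ?_, ?_, ?_⟩
    · intro i hi
      simp only [Finset.mem_sup, id] at hi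
      grind
    · grind
    · grind
    · grind
    · grind
    · grind
    · grind
  · rintro ⟨V, S, Q⟩ hp
    simp only [mem_sigma, mem_parts, mem_powerset, mem_sdiff, mem_union] at hp ⊢
    obtain ⟨hV, ⟨h1, h2, h3⟩, k1, k2, k3⟩ := hp
    refine ⟨⟨?_, ?_, ?_⟩, subset_union_left⟩
    · grind
    · have hd : ∀ s ∈ S, ∀ t ∈ Q, ∀ i, i ∈ s → i ∈ t → False := fun s hs t ht i his hit =>
        ((k3 i).2 ⟨t, ht, hit⟩).2 ((h3 i).2 ⟨s, hs, his⟩)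
      rintro s (hs | hs) t (ht | ht) i his hit
      · exact h2 s hs t ht i his hit
      · exact (hd s hs t ht i his hit).elim
      · exact (hd t ht s hs i hit his).elim
      · exact k2 s hs t ht i his hit
    · grind
  · rintro ⟨P, S⟩ hp
    simp only [mem_sigma, mem_powerset] at hp
    simp [union_sdiff_of_subset hp.2]
  · rintro ⟨V, S, Q⟩ hp
    simp only [mem_sigma, mem_parts, mem_powerset, mem_sdiff] at hp
    obtain ⟨hV, ⟨h1, h2, h3⟩, k1, k2, k3⟩ := hp
    have e1 : S.sup id = V := by
      ext i; simp only [Finset.mem_sup, id]; grind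
    have e2 : (S ∪ Q) \ S = Q := by
      rw [union_sdiff_left, Finset.sdiff_eq_self_iff_disjoint, Finset.disjoint_left]
      intro s hs hs'
      obtain ⟨i, hi⟩ := k1 s hs
      exact ((k3 i).2 ⟨s, hs, hi⟩).2 ((h3 i).2 ⟨s, hs', hi⟩)
    simp [e1, e2]
  · rintro ⟨P, S⟩ hp
    rfl

variable {R : Type*} [CommRing R]

def EE (F : Finset α → R) (U : Finset α) : R := ∑ P ∈ parts U, ∏ I ∈ P, F I

def mu (k : ℕ) : ℤ := (-1 : ℤ) ^ (k - 1) * ((k - 1).factorial : ℤ)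

def LL (m : Finset α → R) (U : Finset α) : R := ∑ P ∈ parts U, mu P.card • ∏ I ∈ P, m I

theorem EE_empty (F : Finset α → R) : EE F ∅ = 1 := by
  simp [EE, parts_empty]

/-- the unique block containing a point -/
theorem exists_block {U : Finset α} {P : Finset (Finset α)} (hP : P ∈ parts U) {a : α}
    (ha : a ∈ U) : ∃ I ∈ P, P.filter (fun I => a ∈ I) = {I} := by
  rw [mem_parts] at hP
  obtain ⟨h1, h2, h3⟩ := hP
  obtain ⟨I, hI, haI⟩ := (h3 a).1 ha
  refine ⟨I, hI, ?_⟩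
  ext J
  rw [mem_filter, mem_singleton]
  constructor
  · rintro ⟨hJ, haJ⟩; exact h2 J hJ I hI a haJ haI
  · rintro rfl; exact ⟨hI, haI⟩

theorem EE_rec (F : Finset α → R) (U : Finset α) (a : α) (ha : a ∈ U) :
    EE F U = ∑ J ∈ (U.erase a).powerset, F (U \ J) * EE F J := by
  have h := sum_marked U (fun I Q => if a ∈ I then F I * ∏ J ∈ Q, F J else 0)
  have hl : EE F U = ∑ P ∈ parts U, ∑ I ∈ P,
      (if a ∈ I then F I * ∏ J ∈ P.erase I, F J else 0) := by
    refine Finset.sum_congr rfl fun P hP => ?_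
    obtain ⟨I, hI, hf⟩ := exists_block hP ha
    rw [← Finset.sum_filter, hf, Finset.sum_singleton, Finset.mul_prod_erase _ _ hI]
  rw [hl, h]
  have : ∀ I, (∑ Q ∈ parts (U \ I), if a ∈ I then F I * ∏ J ∈ Q, F J else 0) =
      if a ∈ I then F I * EE F (U \ I) else 0 := by
    intro I
    split_ifs
    · rw [EE, Finset.mul_sum]
    · simp
  simp_rw [this]
  rw [← Finset.sum_filter]
  refine Finset.sum_bij' (fun I _ => U \ I) (fun J _ => U \ J) ?_ ?_ ?_ ?_ ?_
  · intro I hI; simp only [mem_filter, mem_powerset] at hI ⊢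
    intro i hi; grind
  · intro J hJ; simp only [mem_filter, mem_powerset] at hJ ⊢
    refine ⟨⟨sdiff_subset, a, ?_⟩, ?_⟩ <;> grind
  · intro I hI; simp only [mem_filter, mem_powerset] at hI
    simp [hI.1.1]
  · intro J hJ; simp only [mem_powerset] at hJ
    simp [hJ.trans (erase_subset _ _)]
  · intro I hI; simp only [mem_filter, mem_powerset] at hI
    simp [hI.1.1]

theorem mu_rec (k : ℕ) (hk : 2 ≤ k) : mu k + ((k - 1 : ℕ) : ℤ) * mu (k - 1) = 0 := by
  obtain ⟨j, rfl⟩ := Nat.exists_eq_add_of_le' hk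
  simp only [mu, show j + 2 - 1 = j + 1 from rfl, Nat.add_sub_cancel, Nat.factorial_succ, pow_succ]
  push_cast
  ring

theorem card_one {U : Finset α} {P : Finset (Finset α)} (hP : P ∈ parts U) (hc : P.card = 1) :
    P = {U} := by
  rw [Finset.card_eq_one] at hc
  obtain ⟨I, rfl⟩ := hc
  rw [mem_parts] at hP
  congr 1
  ext i
  rw [hP.2.2]; simp

theorem singleton_mem_parts {U : Finset α} (hU : U.Nonempty) : {U} ∈ parts U := by
  rw [mem_parts]; simp [hU]

theorem LL_rec (m : Finset α → R) (hm : m ∅ = 1) (U : Finset α) (a : α) (ha : a ∈ U) :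
    m U = ∑ J ∈ (U.erase a).powerset, LL m (U \ J) * m J := by
  have h := sum_marked U (fun I Q => if a ∉ I then m I * (mu Q.card • ∏ J ∈ Q, m J) else 0)
  have hr : ∀ I, (∑ Q ∈ parts (U \ I), if a ∉ I then m I * (mu Q.card • ∏ J ∈ Q, m J) else 0) =
      if a ∉ I then LL m (U \ I) * m I else 0 := by
    intro I
    split_ifs
    · simp
    · rw [LL, mul_comm, Finset.mul_sum]
  simp_rw [hr] at h
  rw [← Finset.sum_filter] at h
  have hset : (U.erase a).powerset =
      insert ∅ ((U.powerset.filter (fun I => I.Nonempty)).filter (fun I => a ∉ I)) := by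
    ext J
    simp only [mem_powerset, mem_insert, mem_filter]
    rcases J.eq_empty_or_nonempty with rfl | hJ
    · simp
    · simp [hJ, hJ.ne_empty, subset_erase]
  rw [hset, Finset.sum_insert (by simp), ← h, sdiff_empty, hm, mul_one, LL,
    ← Finset.sum_add_distrib]
  rw [Finset.sum_eq_single_of_mem {U} (singleton_mem_parts ⟨a, ha⟩)]
  · simp [mu, ha]
  · intro P hP hne
    obtain ⟨I, hI, hf⟩ := exists_block hP ha
    have e : ∀ J ∈ P, (if a ∉ J then m J * (mu (P.erase J).card • ∏ J ∈ P.erase J, m J) else 0) =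
        if a ∉ J then mu (P.card - 1) • ∏ J ∈ P, m J else 0 := by
      intro J hJ
      rw [Finset.card_erase_of_mem hJ, mul_smul_comm, Finset.mul_prod_erase _ _ hJ]
    rw [Finset.sum_congr rfl e, ← Finset.sum_filter, Finset.sum_const]
    have hc : (P.filter (fun J => a ∉ J)).card = P.card - 1 := by
      have := Finset.card_filter_add_card_filter_not (s := P) (fun J => a ∈ J)
      rw [hf, card_singleton] at this
      omega
    rw [hc, ← natCast_zsmul, smul_smul, ← add_smul, mu_rec, zero_smul]
    have h1 : 0 < P.card := Finset.card_pos.2 ⟨I, hI⟩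
    by_contra hlt
    exact hne (card_one hP (by omega))

theorem EE_LL (m : Finset α → R) (hm : m ∅ = 1) (U : Finset α) : EE (LL m) U = m U := by
  induction U using Finset.strongInduction with
  | H U ih =>
    rcases U.eq_empty_or_nonempty with rfl | ⟨a, ha⟩
    · rw [EE_empty, hm]
    · rw [EE_rec _ U a ha, LL_rec m hm U a ha]
      refine Finset.sum_congr rfl fun J hJ => ?_
      rw [mem_powerset] at hJ
      rw [ih J (lt_of_le_of_lt hJ (erase_ssubset ha))]

theorem LL_singleton (m : Finset α → R) (a : α) : LL m {a} = m {a} := by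
  rw [LL, Finset.sum_eq_single_of_mem {{a}} (singleton_mem_parts (by simp))]
  · simp [mu]
  · intro P hP hne
    exfalso
    obtain ⟨I, hI, hf⟩ := exists_block hP (a := a) (by simp)
    apply hne
    rw [mem_parts] at hP
    obtain ⟨h1, h2, h3⟩ := hP
    have key : ∀ J ∈ P, J = {a} := by
      intro J hJ
      have : J ⊆ {a} := fun i hi => (h3 i).2 ⟨J, hJ, hi⟩
      exact (Finset.subset_singleton_iff.1 this).resolve_left (h1 J hJ).ne_empty
    ext J
    rw [mem_singleton]
    refine ⟨key J, ?_⟩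
    rintro rfl
    rw [← key I hI]; exact hI

theorem LL_prod (x : α → R) (U : Finset α) (hU : 2 ≤ U.card) :
    LL (fun J => ∏ i ∈ J, x i) U = 0 := by
  induction U using Finset.strongInduction with
  | H U ih =>
    obtain ⟨a, ha⟩ : U.Nonempty := Finset.card_pos.1 (by omega)
    have h := LL_rec (fun J => ∏ i ∈ J, x i) (by simp) U a ha
    have hne : U.erase a ≠ ∅ := by
      intro h0
      have := Finset.card_erase_of_mem ha
      rw [h0, card_empty] at this
      omega
    rw [← Finset.sum_subset (s₁ := {∅, U.erase a}), Finset.sum_pair hne.symm] at h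
    · have e : U \ U.erase a = {a} := by
        ext i; simp only [mem_sdiff, mem_erase, mem_singleton]; grind
      simp only [sdiff_empty, prod_empty, mul_one, e, LL_singleton, prod_singleton] at h
      rw [Finset.mul_prod_erase _ _ ha] at h
      simpa using h
    · intro J; simp only [mem_insert, mem_singleton, mem_powerset]
      rintro (rfl | rfl) <;> simp
    · intro J hJ hJ'
      simp only [mem_insert, mem_singleton, mem_powerset, not_or] at hJ hJ'
      have hJU : J ⊆ U := hJ.trans (erase_subset _ _)
      rw [ih (U \ J), zero_mul]
      · exact sdiff_ssubset hJU (nonempty_iff_ne_empty.2 hJ'.1)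
      · have h1 : J.card < (U.erase a).card :=
          card_lt_card (lt_of_le_of_ne hJ hJ'.2)
        rw [card_erase_of_mem ha] at h1
        rw [card_sdiff_of_subset hJU]
        omega

theorem EE_single (F : Finset α → R) (hF : ∀ I, 2 ≤ I.card → F I = 0) (U : Finset α) :
    EE F U = ∏ i ∈ U, F {i} := by
  induction U using Finset.strongInduction with
  | H U ih =>
    rcases U.eq_empty_or_nonempty with rfl | ⟨a, ha⟩
    · simp [EE_empty]
    · rw [EE_rec _ U a ha, Finset.sum_eq_single_of_mem (U.erase a) (by simp)]
      · have e : U \ U.erase a = {a} := by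
          ext i; simp only [mem_sdiff, mem_erase, mem_singleton]; grind
        rw [e, ih _ (erase_ssubset ha), Finset.mul_prod_erase U (fun i => F {i}) ha]
      · intro J hJ hne
        rw [mem_powerset] at hJ
        have h1 : J.card < (U.erase a).card :=
          card_lt_card (lt_of_le_of_ne hJ hne)
        rw [card_erase_of_mem ha] at h1
        rw [hF, zero_mul]
        rw [card_sdiff_of_subset (hJ.trans (erase_subset _ _))]
        omega

/-! reindexing -/

theorem partitionsOf_eq (n : ℕ) : partitionsOf n = parts (univ : Finset (Fin n)) := by
  unfold partitionsOf parts
  congr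

theorem parts_map {β : Type*} [DecidableEq β] (f : α ↪ β) (U : Finset α) :
    parts (U.map f) = (parts U).map (mapEmbedding (mapEmbedding f).toEmbedding).toEmbedding := by
  ext P
  simp only [mem_map, RelEmbedding.coe_toEmbedding, mapEmbedding_apply]
  constructor
  · intro hP
    rw [mem_parts] at hP
    obtain ⟨h1, h2, h3⟩ := hP
    have : ∃ Q : Finset (Finset α), Q.map (mapEmbedding f).toEmbedding = P := by
      have hh : P ⊆ (U.powerset).map (mapEmbedding f).toEmbedding := by
        intro s hs
        have : s ⊆ U.map f := fun i hi => (h3 i).2 ⟨s, hs, hi⟩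
        obtain ⟨t, ht, rfl⟩ := Finset.subset_map_iff.1 this
        simp only [mem_map, RelEmbedding.coe_toEmbedding, mapEmbedding_apply, mem_powerset]
        exact ⟨t, ht, rfl⟩
      obtain ⟨t, _, rfl⟩ := Finset.subset_map_iff.1 hh
      exact ⟨t, rfl⟩
    obtain ⟨Q, rfl⟩ := this
    refine ⟨Q, ?_, rfl⟩
    rw [mem_parts]
    refine ⟨by simpa using h1, ?_, ?_⟩
    · intro s hs t ht i his hit
      have := h2 (s.map f) (by simpa using hs) (t.map f) (by simpa using ht) (f i)
        (by simpa using his) (by simpa using hit)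
      exact Finset.map_injective f this
    · intro i
      simpa using h3 (f i)
  · rintro ⟨Q, hQ, rfl⟩
    rw [mem_parts] at hQ ⊢
    obtain ⟨h1, h2, h3⟩ := hQ
    refine ⟨by simpa using h1, ?_, ?_⟩
    · intro s hs t ht i his hit
      simp only [mem_map, RelEmbedding.coe_toEmbedding, mapEmbedding_apply] at hs ht
      obtain ⟨s, hs, rfl⟩ := hs
      obtain ⟨t, ht, rfl⟩ := ht
      obtain ⟨j, hj, rfl⟩ := mem_map.1 his
      rw [h2 s hs t ht j hj (by simpa using hit)]
    intro i
    simp only [mem_map, RelEmbedding.coe_toEmbedding, mapEmbedding_apply]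
    constructor
    · rintro ⟨j, hj, rfl⟩
      obtain ⟨s, hs, hjs⟩ := (h3 j).1 hj
      exact ⟨s.map f, ⟨s, hs, rfl⟩, by simpa using hjs⟩
    · rintro ⟨_, ⟨s, hs, rfl⟩, hi⟩
      obtain ⟨j, hj, rfl⟩ := mem_map.1 hi
      exact ⟨j, (h3 j).2 ⟨s, hs, hj⟩, rfl⟩

theorem LL_map {β : Type*} [DecidableEq β] (f : α ↪ β) (U : Finset α) (m : Finset β → R) :
    LL m (U.map f) = LL (fun J => m (J.map f)) U := by
  rw [LL, parts_map, Finset.sum_map, LL]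
  refine Finset.sum_congr rfl fun P hP => ?_
  simp

noncomputable def emb (s : Finset α) : Fin s.card ↪ α :=
  s.equivFin.symm.toEmbedding.trans (Function.Embedding.subtype _)

theorem univ_map_emb (s : Finset α) : (univ : Finset (Fin s.card)).map (emb s) = s := by
  ext i
  simp only [emb, mem_map, mem_univ, true_and, Function.Embedding.trans_apply,
    Equiv.coe_toEmbedding, Function.Embedding.subtype_apply]
  constructor
  · rintro ⟨j, rfl⟩; exact (s.equivFin.symm j).2
  · intro hi; exact ⟨s.equivFin ⟨i, hi⟩, by simp⟩

theorem cumul_restr {S : Type*} [CommRing S] (f : R → S) (x : α → R) (s : Finset α) :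
    cumul f s.card (restr x s) = LL (fun J => f (∏ i ∈ J, x i)) s := by
  conv_rhs => rw [← univ_map_emb s, LL_map]
  rw [cumul, LL, partitionsOf_eq]
  refine Finset.sum_congr rfl fun P hP => ?_
  simp [mu, emb, restr]

theorem koszul_restr (D : R → R) (hD : D 1 = 0) (F : α → R) (P : Finset α) :
    koszul D P.card (fun j => F (P.equivFin.symm j).1) =
      ∑ S ∈ P.powerset, (-1 : ℤ) ^ (P \ S).card • (D (∏ i ∈ S, F i) * ∏ i ∈ P \ S, F i) := by
  have hp : P.powerset = (univ : Finset (Fin P.card)).powerset.map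
      (mapEmbedding (emb P)).toEmbedding := by
    conv_lhs => rw [← univ_map_emb P]
    ext S
    simp only [mem_powerset, Finset.subset_map_iff, mem_map, RelEmbedding.coe_toEmbedding,
      mapEmbedding_apply]
    constructor
    · rintro ⟨t, ht, rfl⟩; exact ⟨t, ht, rfl⟩
    · rintro ⟨t, ht, rfl⟩; exact ⟨t, ht, rfl⟩
  rw [hp, Finset.sum_map, koszul, Finset.sum_filter]
  refine Finset.sum_congr rfl fun S _ => ?_
  simp only [RelEmbedding.coe_toEmbedding, mapEmbedding_apply]
  have hc : P \ S.map (emb P) = (Sᶜ).map (emb P) := by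
    have h0 : P \ S.map (emb P) = univ.map (emb P) \ S.map (emb P) := by rw [univ_map_emb]
    rw [h0, compl_eq_univ_sdiff]
    ext i
    simp only [mem_sdiff, mem_map]
    constructor
    · rintro ⟨⟨j, hj, rfl⟩, hn⟩; exact ⟨j, ⟨hj, fun h => hn ⟨j, h, rfl⟩⟩, rfl⟩
    · rintro ⟨j, ⟨hj, hn⟩, rfl⟩
      refine ⟨⟨j, hj, rfl⟩, ?_⟩
      rintro ⟨k, hk, e⟩
      exact hn ((emb P).injective e ▸ hk)
  rw [hc, card_map, card_compl, Fintype.card_fin, prod_map, prod_map]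
  split_ifs with hS
  · rfl
  · rw [not_nonempty_iff_eq_empty] at hS
    subst hS
    simp [hD]

theorem koszul_fin (D : R → R) (hD : D 1 = 0) (n : ℕ) (x : Fin n → R) :
    koszul D n x =
      ∑ S ∈ (univ : Finset (Fin n)).powerset,
        (-1 : ℤ) ^ (univ \ S).card • (D (∏ i ∈ S, x i) * ∏ i ∈ univ \ S, x i) := by
  rw [koszul, Finset.sum_filter]
  refine Finset.sum_congr rfl fun S _ => ?_
  rw [← compl_eq_univ_sdiff, card_compl, Fintype.card_fin]
  split_ifs with hS
  · rfl
  · rw [not_nonempty_iff_eq_empty] at hS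
    subst hS
    simp [hD]

end Aux

/-- for a semifull algebra contraction `(σ,τ,h)` of `(A,d_A)` onto `(B,d_B)`,
the Koszul brackets of `d_B` satisfy, for `n ≥ 2`:
`K(d_B)_n(x_1,…,x_n) = Σ_{partitions into k ≥ 2 blocks} σ(K(d_A)_k(κ(τ)_{|I_1|}(…),…,κ(τ)_{|I_k|}(…)))`. -/
theorem semifull_transfer_koszul (K A B : Type*) [Field K] [CharZero K]
    [CommRing A] [Algebra K A] [CommRing B] [Algebra K B]
    (dA : A →ₗ[K] A) (dB : B →ₗ[K] B) (σ : A →ₗ[K] B) (τ : B →ₗ[K] A) (h : A →ₗ[K] A)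
    (hdA2 : ∀ a, dA (dA a) = 0) (hdB2 : ∀ x, dB (dB x) = 0)
    (hσd : ∀ a, σ (dA a) = dB (σ a)) (hτd : ∀ x, τ (dB x) = dA (τ x))
    (hστ : ∀ x, σ (τ x) = x)
    (hhtp : ∀ a, h (dA a) + dA (h a) = τ (σ a) - a)
    (hσh : ∀ a, σ (h a) = 0) (hhτ : ∀ x, h (τ x) = 0) (hhh : ∀ a, h (h a) = 0)
    (hdA1 : dA 1 = 0) (hdB1 : dB 1 = 0)
    (s1 : ∀ a b : A, h (h a * h b) = 0) (s2 : ∀ (a : A) (x : B), h (h a * τ x) = 0)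
    (s3 : ∀ x y : B, h (τ x * τ y) = 0) (s4 : h 1 = 0)
    (s5 : ∀ a b : A, σ (h a * h b) = 0) (s6 : ∀ (a : A) (x : B), σ (h a * τ x) = 0)
    (s7 : ∀ x y : B, σ (τ x * τ y) = x * y) (s8 : σ 1 = 1) :
    ∀ (n : ℕ), 2 ≤ n → ∀ x : Fin n → B,
      koszul (⇑dB) n x =
        ∑ P ∈ (partitionsOf n).filter fun P => 2 ≤ P.card,
          σ (koszul (⇑dA) P.card fun j =>
            cumul (⇑τ) ((P.equivFin.symm j).1.card) (restr x (P.equivFin.symm j).1)) := by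
  have hτ1 : τ 1 = 1 := by
    have := hhtp 1
    rw [hdA1, s4, s8] at this
    simp at this
    exact (sub_eq_zero.1 this.symm)
  have hC : ∀ a, h a = 0 → a = τ (σ a) - h (dA a) := by
    intro a ha
    have := hhtp a
    rw [ha, map_zero, add_zero] at this
    rw [this]; ring
  have hmul : ∀ a b, h a = 0 → h b = 0 → h (a * b) = 0 ∧ σ (a * b) = σ a * σ b := by
    intro a b ha hb
    have e : a * b = τ (σ a) * τ (σ b) - h (dA b) * τ (σ a) - h (dA a) * τ (σ b)
        + h (dA a) * h (dA b) := by
      conv_lhs => rw [hC a ha, hC b hb]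
      ring
    rw [e]
    simp only [map_add, map_sub, s1, s2, s3, s5, s6, s7]
    simp
  have hprod : ∀ {ι : Type _} (s : Finset ι) (f : ι → A), (∀ i ∈ s, h (f i) = 0) →
      h (∏ i ∈ s, f i) = 0 ∧ σ (∏ i ∈ s, f i) = ∏ i ∈ s, σ (f i) := by
    intro ι s f
    classical
    induction s using Finset.induction_on with
    | empty => intro _; simp [s4, s8]
    | insert a s ha ih =>
      intro hf
      have h1 := ih fun i hi => hf i (mem_insert_of_mem hi)
      have h2 := hmul (f a) _ (hf a (mem_insert_self _ _)) h1.1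
      rw [prod_insert ha, prod_insert ha, h2.2, h1.2]
      exact ⟨h2.1, rfl⟩
  intro n hn x
  set κ : Finset (Fin n) → A := Aux.LL (fun J => τ (∏ i ∈ J, x i)) with hκ
  have hκh : ∀ I, h (κ I) = 0 := by
    intro I
    rw [hκ, Aux.LL, map_sum]
    refine Finset.sum_eq_zero fun P _ => ?_
    rw [map_zsmul, (hprod P _ fun J _ => hhτ _).1, smul_zero]
  have hκσ : ∀ I, σ (κ I) = Aux.LL (fun J => ∏ i ∈ J, x i) I := by
    intro I
    rw [hκ, Aux.LL, map_sum, Aux.LL]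
    refine Finset.sum_congr rfl fun P _ => ?_
    rw [map_zsmul, (hprod P _ fun J _ => hhτ _).2]
    simp only [hστ]
  have hE : ∀ V, ∑ S ∈ Aux.parts V, ∏ I ∈ S, κ I = τ (∏ i ∈ V, x i) := by
    intro V
    exact Aux.EE_LL (fun J => τ (∏ i ∈ J, x i)) (by simpa using hτ1) V
  have hterm : ∀ P ∈ partitionsOf n, σ (koszul (⇑dA) P.card fun j =>
            cumul (⇑τ) ((P.equivFin.symm j).1.card) (restr x (P.equivFin.symm j).1)) =
      ∑ S ∈ P.powerset, (-1 : ℤ) ^ (P \ S).card •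
        σ (dA (∏ I ∈ S, κ I) * ∏ I ∈ P \ S, κ I) := by
    intro P _
    simp_rw [Aux.cumul_restr]
    rw [Aux.koszul_restr _ hdA1 κ P, map_sum]
    simp only [map_zsmul]
  have hall : koszul (⇑dB) n x = ∑ P ∈ partitionsOf n, σ (koszul (⇑dA) P.card fun j =>
            cumul (⇑τ) ((P.equivFin.symm j).1.card) (restr x (P.equivFin.symm j).1)) := by
    rw [Finset.sum_congr rfl hterm, Aux.partitionsOf_eq,
      Aux.sum_split univ (fun S Q => (-1 : ℤ) ^ Q.card • σ (dA (∏ I ∈ S, κ I) * ∏ I ∈ Q, κ I)),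
      Aux.koszul_fin _ hdB1]
    refine Finset.sum_congr rfl fun V _ => ?_
    rw [Finset.sum_comm]
    have h1 : ∀ Q ∈ Aux.parts (univ \ V), ∑ S ∈ Aux.parts V,
        (-1 : ℤ) ^ Q.card • σ (dA (∏ I ∈ S, κ I) * ∏ I ∈ Q, κ I) =
        dB (∏ i ∈ V, x i) * ∏ I ∈ Q, -Aux.LL (fun J => ∏ i ∈ J, x i) I := by
      intro Q _
      rw [← Finset.smul_sum, ← map_sum, ← Finset.sum_mul, ← map_sum, hE, ← hτd]
      have hq := hprod Q κ fun I _ => hκh I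
      rw [(hmul _ _ (hhτ _) hq.1).2, hστ, hq.2, Finset.prod_neg]
      simp only [hκσ]
      rw [zsmul_eq_mul]; push_cast; ring
    rw [Finset.sum_congr rfl h1, ← Finset.mul_sum]
    have h2 := Aux.EE_single (fun I => -Aux.LL (fun J => ∏ i ∈ J, x i) I)
      (fun I hI => by rw [Aux.LL_prod x I hI, neg_zero]) (univ \ V)
    rw [Aux.EE] at h2
    rw [h2]
    simp only [Aux.LL_singleton, prod_singleton]
    rw [Finset.prod_neg, zsmul_eq_mul]; push_cast; ring
  rw [hall, Finset.sum_filter]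
  refine Finset.sum_congr rfl fun P hP => ?_
  split_ifs with hc
  · rfl
  · have hP' : P ∈ Aux.parts (univ : Finset (Fin n)) := Aux.partitionsOf_eq n ▸ hP
    have hcu : (univ : Finset (Fin n)).card = n := by simp
    obtain ⟨I, hI, -⟩ := Aux.exists_block hP' (a := (⟨0, by omega⟩ : Fin n)) (mem_univ _)
    have hpos : 0 < P.card := Finset.card_pos.2 ⟨I, hI⟩
    have hPu := Aux.card_one hP' (by omega)
    rw [hterm P hP]
    refine Finset.sum_eq_zero fun S hS => ?_
    rw [hPu, mem_powerset, Finset.subset_singleton_iff] at hS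
    rcases hS with rfl | rfl
    · simp [hdA1]
    · rw [hPu]
      simp only [sdiff_self, prod_singleton]
      rw [Finset.bot_eq_empty, prod_empty, mul_one, hσd, hκσ, Aux.LL_prod x univ (by omega)]
      simp
end

section
/- Let (Δ_n)_{n≥0} and (Δ′_n)_{n≥0} be sequences of K-linear endomorphisms of a commutative unital K-algebra A with Δ_n(1)=Δ′_n(1)=0 and with K(Δ_n)_{n+2} = 0 and K(Δ′_n)_{n+2} = 0 identically for every n ≥ 0 (i.e. Δ_n and Δ′_n are differential operators of order ≤ n+1). For m ≥ 0 set C_m := Σ_{j=0}^{m} (Δ_j∘Δ′_{m−j} − Δ′_j∘Δ_{m−j}). Then for every n ≥ 1 and all a_1,…,a_n ∈ A: K(C_{n−1})_n(a_1,…,a_n) = Σ_{i=1}^{n} Σ_{S⊆{1,…,n},|S|=i} [ K(Δ_{n−i})_{n−i+1}(K(Δ′_{i−1})_i((a_s)_{s∈S}), (a_j)_{j∉S}) − K(Δ′_{n−i})_{n−i+1}(K(Δ_{i−1})_i((a_s)_{s∈S}), (a_j)_{j∉S}) ]. (This is the Taylor-coefficient form of the statement that Δ ↦ P(Δ) is a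 morphism of Lie algebras from BV operators to coderivations with multiderivation Taylor coefficients.) -/
open Finset

section aux
variable {K A : Type*} [Field K] [CommRing A] [Algebra K A]

noncomputable def kF {ι : Type*} [DecidableEq ι] (D : A →ₗ[K] A) (a : ι → A) (b : A)
    (S : Finset ι) : A :=
  ∑ T ∈ S.powerset, D (b * ∏ i ∈ T, a i) * ∏ i ∈ S \ T, (- a i)

variable {ι κ : Type*} [DecidableEq ι] [DecidableEq κ]

lemma kF_empty (D : A →ₗ[K] A) (a : ι → A) (b : A) : kF D a b ∅ = D b := by
  simp [kF]

lemma kF_insert (D : A →ₗ[K] A) (a : ι → A) (b : A) (x : ι) (S : Finset ι) (hx : x ∉ S) :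
    kF D a b (insert x S) = kF D a (b * a x) S - a x * kF D a b S := by
  unfold kF
  rw [Finset.sum_powerset_insert hx, add_comm, sub_eq_add_neg, Finset.mul_sum,
    ← Finset.sum_neg_distrib]
  congr 1
  · refine Finset.sum_congr rfl fun T hT => ?_
    have hT' := Finset.mem_powerset.1 hT
    have hxT : x ∉ T := fun h => hx (hT' h)
    rw [Finset.prod_insert hxT, ← mul_assoc]
    congr 2
    ext i
    simp only [Finset.mem_sdiff, Finset.mem_insert]
    grind
  · refine Finset.sum_congr rfl fun T hT => ?_
    have hT' := Finset.mem_powerset.1 hT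
    have hxT : x ∉ T := fun h => hx (hT' h)
    rw [Finset.insert_sdiff_of_notMem _ hxT, Finset.prod_insert (by simp [hx])]
    ring

lemma kF_add (D : A →ₗ[K] A) (a : ι → A) (b c : A) (S : Finset ι) :
    kF D a (b + c) S = kF D a b S + kF D a c S := by
  simp [kF, add_mul, Finset.sum_add_distrib]

lemma kF_sub (D : A →ₗ[K] A) (a : ι → A) (b c : A) (S : Finset ι) :
    kF D a (b - c) S = kF D a b S - kF D a c S := by
  simp [kF, sub_mul, Finset.sum_sub_distrib]

lemma kF_zero (D : A →ₗ[K] A) (a : ι → A) (S : Finset ι) :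
    kF D a 0 S = 0 := by
  simp [kF]

lemma kF_map (D : A →ₗ[K] A) (e : κ ↪ ι) (a : ι → A) (b : A) (S : Finset κ) :
    kF D a b (S.map e) = kF D (fun i => a (e i)) b S := by
  induction S using Finset.induction_on generalizing b with
  | empty => simp [kF_empty]
  | insert x S hx ih =>
    rw [Finset.map_insert, kF_insert _ _ _ _ _ (by simpa using hx), kF_insert _ _ _ _ _ hx, ih, ih]

lemma kF_restr (D : A →ₗ[K] A) (a : ι → A) (b : A) (S : Finset ι) :
    kF D (restr a S) b univ = kF D a b S := by
  have h : S = univ.map (S.equivFin.symm.toEmbedding.trans (Function.Embedding.subtype _)) := by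
    ext i
    simp only [mem_map, mem_univ, true_and]
    constructor
    · intro hi
      exact ⟨S.equivFin ⟨i, hi⟩, by simp⟩
    · rintro ⟨j, rfl⟩
      simp
  conv_rhs => rw [h, kF_map]
  rfl

lemma koszul_eq (D : A →ₗ[K] A) (hD : D 1 = 0) (n : ℕ) (a : Fin n → A) :
    koszul (⇑D) n a = kF D a 1 univ := by
  unfold koszul kF
  rw [Finset.sum_filter]
  refine Finset.sum_congr rfl fun T _ => ?_
  split_ifs with h
  · rw [Finset.prod_neg, ← Finset.compl_eq_univ_sdiff, Finset.card_compl, Fintype.card_fin, one_mul]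
    rw [zsmul_eq_mul]
    push_cast
    ring
  · rw [Finset.not_nonempty_iff_eq_empty] at h
    simp [h, hD]

lemma kF_cons (D : A →ₗ[K] A) (n : ℕ) (a : Fin n → A) (b c : A) :
    kF D (Fin.cons b a : Fin (n+1) → A) c univ = kF D a (c * b) univ - b * kF D a c univ := by
  have h : (univ : Finset (Fin (n+1))) = insert 0 (univ.map (Fin.succEmb n)) := by
    ext i
    refine Fin.cases ?_ (fun j => ?_) i <;> simp
  rw [h, kF_insert _ _ _ _ _ (by simp), kF_map, kF_map]
  simp

lemma kF_step (D : A →ₗ[K] A) (a : ι → A) (m : ℕ)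
    (h : ∀ (S : Finset ι), S.card = m → ∀ b, kF D a b S = b * kF D a 1 S) :
    ∀ (S : Finset ι), S.card = m + 1 → ∀ b, kF D a b S = 0 := by
  intro S hS b
  obtain ⟨x, T, hx, rfl, hT⟩ := Finset.card_eq_succ.1 hS
  rw [kF_insert _ _ _ _ _ hx, h T hT, h T hT b]
  ring

lemma kF_lin (D : A →ₗ[K] A) (hD : D 1 = 0) (n : ℕ)
    (h : ∀ a : Fin (n + 2) → A, koszul (⇑D) (n + 2) a = 0) (a : ι → A)
    (S : Finset ι) (hS : S.card = n + 1) (b : A) : kF D a b S = b * kF D a 1 S := by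
  have h1 := kF_restr D a b S
  have h2 := kF_restr D a 1 S
  rw [← h1, ← h2]
  generalize restr a S = a'
  revert a'
  rw [hS]
  intro a'
  have := h (Fin.cons b a')
  rw [koszul_eq D hD, kF_cons, one_mul] at this
  exact sub_eq_zero.1 this

lemma kF_vanish (D : A →ₗ[K] A) (hD : D 1 = 0) (n : ℕ)
    (h : ∀ a : Fin (n + 2) → A, koszul (⇑D) (n + 2) a = 0) (a : ι → A) (k : ℕ) :
    ∀ (S : Finset ι), S.card = n + 2 + k → ∀ b : A, kF D a b S = 0 := by
  induction k with
  | zero => exact kF_step D a (n+1) (fun S hS b => kF_lin D hD n h a S hS b)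
  | succ k ih =>
    exact kF_step D a (n+2+k) (fun S hS b => by rw [ih S hS, ih S hS, mul_zero])

lemma kF_comp (D D' : A →ₗ[K] A) (a : ι → A) (V : Finset ι) (b : A) :
    ∑ S ∈ V.powerset, kF D a (kF D' a b S) (V \ S) = kF (D ∘ₗ D') a b V := by
  induction V using Finset.induction_on generalizing b with
  | empty => simp [kF_empty]
  | insert x V hx ih =>
    rw [Finset.sum_powerset_insert hx, kF_insert _ _ _ _ _ hx, ← ih, ← ih, Finset.mul_sum,
      ← Finset.sum_add_distrib, ← Finset.sum_sub_distrib]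
    refine Finset.sum_congr rfl fun T hT => ?_
    have hT' := Finset.mem_powerset.1 hT
    have hxT : x ∉ T := fun h => hx (hT' h)
    have e : insert x V \ insert x T = V \ T := by
      ext i
      simp only [Finset.mem_sdiff, Finset.mem_insert]
      grind
    rw [e, Finset.insert_sdiff_of_notMem _ hxT, kF_insert _ _ _ _ _ (by simp [hx]),
      kF_insert _ _ _ _ _ hxT, kF_sub, mul_comm (a x) (kF D' a b T)]
    ring

noncomputable def kB {n : ℕ} (D D' : A →ₗ[K] A) (a : Fin n → A) (S : Finset (Fin n)) : A :=
  kF D a (kF D' a 1 S) Sᶜ - kF D' a 1 S * kF D a 1 Sᶜ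

lemma kB_eq {n : ℕ} (D D' : A →ₗ[K] A) (hD : D 1 = 0) (hD' : D' 1 = 0)
    (a : Fin n → A) (S : Finset (Fin n)) :
    koszul (⇑D) (Sᶜ.card + 1)
      (Fin.cons (koszul (⇑D') S.card (restr a S)) (restr a Sᶜ)) = kB D D' a S := by
  rw [koszul_eq D hD, koszul_eq D' hD', kF_cons, kF_restr, kF_restr, kF_restr, one_mul]
  rfl

lemma kB_sum {n : ℕ} (D D' : A →ₗ[K] A) (a : Fin n → A) :
    kF (D ∘ₗ D') a 1 univ = ∑ S, kB D D' a S + ∑ S, kF D' a 1 S * kF D a 1 Sᶜ := by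
  rw [← kF_comp, ← Finset.sum_add_distrib, Finset.powerset_univ]
  refine Finset.sum_congr rfl fun S _ => ?_
  simp [kB, Finset.compl_eq_univ_sdiff]

lemma kB_grade (Δ Δ' : ℕ → (A →ₗ[K] A))
    (hΔ1 : ∀ n, Δ n 1 = 0) (hΔ'1 : ∀ n, Δ' n 1 = 0)
    (hΔord : ∀ (n : ℕ) (a : Fin (n + 2) → A), koszul (⇑(Δ n)) (n + 2) a = 0)
    (hΔ'ord : ∀ (n : ℕ) (a : Fin (n + 2) → A), koszul (⇑(Δ' n)) (n + 2) a = 0)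
    (n : ℕ) (a : Fin n → A) :
    ∑ j ∈ Finset.range n, ∑ S, kB (Δ j) (Δ' (n - 1 - j)) a S =
      ∑ i ∈ Finset.Icc 1 n,
          ∑ S ∈ (Finset.univ : Finset (Fin n)).powerset.filter fun S => S.card = i,
            kB (Δ Sᶜ.card) (Δ' (S.card - 1)) a S := by
  refine Finset.sum_nbij' (fun j => n - j) (fun i => n - i) ?_ ?_ ?_ ?_ ?_
  · intro j hj; simp at hj ⊢; omega
  · intro j hj; simp at hj ⊢; omega
  · intro j hj; simp at hj ⊢; omega
  · intro j hj; simp at hj ⊢; omega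
  · intro j hj
    have hj := Finset.mem_range.1 hj
    rw [Finset.sum_filter, Finset.powerset_univ]
    refine Finset.sum_congr rfl fun S _ => ?_
    have hc : Sᶜ.card + S.card = n := by simpa using Finset.card_compl_add_card S
    split_ifs with h
    · have h1 : Sᶜ.card = j := by omega
      have h2 : S.card - 1 = n - 1 - j := by omega
      rw [h1, h2]
    · unfold kB
      rcases lt_or_ge j Sᶜ.card with h1 | h1
      · obtain h2 | h2 : Sᶜ.card = j + 1 ∨ j + 2 ≤ Sᶜ.card := by omega
        · rw [kF_lin (Δ j) (hΔ1 j) j (hΔord j) a _ h2, sub_self]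
        · have h3 : Sᶜ.card = j + 2 + (Sᶜ.card - (j + 2)) := by omega
          rw [kF_vanish (Δ j) (hΔ1 j) j (hΔord j) a _ _ h3,
            kF_vanish (Δ j) (hΔ1 j) j (hΔord j) a _ _ h3]
          simp
      · have h3 : S.card = (n - 1 - j) + 2 + (S.card - ((n - 1 - j) + 2)) := by omega
        rw [kF_vanish (Δ' (n - 1 - j)) (hΔ'1 _) _ (hΔ'ord _) a _ _ h3, kF_zero]
        simp

lemma kF_D_sub (D D' : A →ₗ[K] A) (a : ι → A) (b : A) (S : Finset ι) :
    kF (D - D') a b S = kF D a b S - kF D' a b S := by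
  simp [kF, sub_mul, Finset.sum_sub_distrib]

lemma kF_D_sum (s : Finset ℕ) (D : ℕ → A →ₗ[K] A) (a : ι → A) (b : A) (S : Finset ι) :
    kF (∑ j ∈ s, D j) a b S = ∑ j ∈ s, kF (D j) a b S := by
  simp only [kF, LinearMap.sum_apply, Finset.sum_mul]
  exact Finset.sum_comm

end aux

/-- for sequences `(Δ_n)`, `(Δ′_n)` of operators killing `1`, with `Δ_n`
and `Δ′_n` differential operators of order ≤ n+1 (`K(Δ_n)_{n+2} = 0 = K(Δ′_n)_{n+2}`),
and `C_m := Σ_{j=0}^{m} (Δ_j∘Δ′_{m−j} − Δ′_j∘Δ_{m−j})`, one has for `n ≥ 1`: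
`K(C_{n−1})_n(a_1,…,a_n) = Σ_{i=1}^{n} Σ_{|S|=i}
  [K(Δ_{n−i})_{n−i+1}(K(Δ′_{i−1})_i((a_s)_{s∈S}),(a_j)_{j∉S})
   − K(Δ′_{n−i})_{n−i+1}(K(Δ_{i−1})_i((a_s)_{s∈S}),(a_j)_{j∉S})]`. -/
theorem derivedPoisson_commutator (K A : Type*) [Field K] [CharZero K]
    [CommRing A] [Algebra K A]
    (Δ Δ' : ℕ → (A →ₗ[K] A))
    (hΔ1 : ∀ n, Δ n 1 = 0) (hΔ'1 : ∀ n, Δ' n 1 = 0)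
    (hΔord : ∀ (n : ℕ) (a : Fin (n + 2) → A), koszul (⇑(Δ n)) (n + 2) a = 0)
    (hΔ'ord : ∀ (n : ℕ) (a : Fin (n + 2) → A), koszul (⇑(Δ' n)) (n + 2) a = 0) :
    ∀ n : ℕ, 1 ≤ n → ∀ a : Fin n → A,
      koszul
          (⇑(∑ j ∈ Finset.range n,
              (Δ j ∘ₗ Δ' (n - 1 - j) - Δ' j ∘ₗ Δ (n - 1 - j)))) n a =
        ∑ i ∈ Finset.Icc 1 n,
          ∑ S ∈ (Finset.univ : Finset (Fin n)).powerset.filter fun S => S.card = i,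
            (koszul (⇑(Δ Sᶜ.card)) (Sᶜ.card + 1)
                (Fin.cons (koszul (⇑(Δ' (S.card - 1))) S.card (restr a S)) (restr a Sᶜ)) -
              koszul (⇑(Δ' Sᶜ.card)) (Sᶜ.card + 1)
                (Fin.cons (koszul (⇑(Δ (S.card - 1))) S.card (restr a S)) (restr a Sᶜ))) := by
  intro n hn a
  rw [koszul_eq _ (by simp [hΔ1, hΔ'1]), kF_D_sum]
  simp only [kB_eq _ _ (hΔ1 _) (hΔ'1 _), kB_eq _ _ (hΔ'1 _) (hΔ1 _), kF_D_sub, kB_sum,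
    Finset.sum_sub_distrib, Finset.sum_add_distrib]
  rw [kB_grade Δ Δ' hΔ1 hΔ'1 hΔord hΔ'ord, kB_grade Δ' Δ hΔ'1 hΔ1 hΔ'ord hΔord]
  have key : ∑ j ∈ Finset.range n, ∑ S, kF (Δ' (n - 1 - j)) a 1 S * kF (Δ j) a 1 Sᶜ =
      ∑ j ∈ Finset.range n, ∑ S, kF (Δ (n - 1 - j)) a 1 S * kF (Δ' j) a 1 Sᶜ := by
    rw [← Finset.sum_range_reflect]
    refine Finset.sum_congr rfl fun j hj => ?_
    have hj := Finset.mem_range.1 hj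
    have e : n - 1 - (n - 1 - j) = j := by omega
    rw [e]
    refine Finset.sum_nbij' (fun S => Sᶜ) (fun S => Sᶜ) ?_ ?_ ?_ ?_ ?_ <;> simp [mul_comm]
  rw [key]
  ring
end
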